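/- Every unsatisfiable linear k-CNF formula has more than 4^k/(4·e²·k³) clauses; equivalently, every linear k-CNF formula with at most 4^k/(4·e²·k³) clauses is satisfiable. -/

import Mathlib

/-
Delete from every clause a variable of maximum degree among its variables. The resulting
(k - 1)-CNF formula is still unsatisfiable, so by the Lovász local lemma some variable `x` occurs
more than 2 ^ (k - 1) / (e (k - 1)) times in it. The variables deleted from the clauses that still
contain `x` have at least that degree in the original formula, and by linearity they are pairwise
distinct. Hence the degrees add up to more than the square of that number, while their total is `k`
times the number of clauses.
-/

section LocalLemma

open MeasureTheory ProbabilityTheory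

variable {Ω ι : Type*}

lemma prod_mul_le_of_forall_mul_le_insert [DecidableEq ι] {R : Type*} [CommSemiring R]
    [PartialOrder R] [IsOrderedRing R] {f : Finset ι → R} {w : ι → R} (s : Finset ι)
    (hw : ∀ i ∈ s, 0 ≤ w i) (hf : ∀ t ⊆ s, ∀ i ∈ s, i ∉ t → w i * f t ≤ f (insert i t)) :
    (∏ i ∈ s, w i) * f ∅ ≤ f s := by
  induction s using Finset.induction_on with
  | empty => simp
  | insert i s hi ih =>
    have ih' : (∏ j ∈ s, w j) * f ∅ ≤ f s :=
      ih (fun j hj => hw j (Finset.mem_insert_of_mem hj)) fun t ht j hj =>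
        hf t (ht.trans (Finset.subset_insert i s)) j (Finset.mem_insert_of_mem hj)
    calc (∏ j ∈ insert i s, w j) * f ∅ = w i * ((∏ j ∈ s, w j) * f ∅) := by
          rw [Finset.prod_insert hi, mul_assoc]
      _ ≤ w i * f s := mul_le_mul_of_nonneg_left ih' (hw i (Finset.mem_insert_self i s))
      _ ≤ f (insert i s) := hf s (Finset.subset_insert i s) i (Finset.mem_insert_self i s) hi

/-- The event that none of the events `A i` with `i ∈ s` occurs, the quantity bounded below by the
Lovász local lemma. -/
def avoid (A : ι → Set Ω) (s : Finset ι) : Set Ω := ⋂ i ∈ s, (A i)ᶜ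

lemma mem_avoid {A : ι → Set Ω} {s : Finset ι} {ω : Ω} : ω ∈ avoid A s ↔ ∀ i ∈ s, ω ∉ A i := by
  simp [avoid]

lemma avoid_anti (A : ι → Set Ω) {s t : Finset ι} (h : s ⊆ t) : avoid A t ⊆ avoid A s :=
  Set.biInter_subset_biInter_left h

lemma avoid_insert [DecidableEq ι] (A : ι → Set Ω) (i : ι) (s : Finset ι) :
    avoid A (insert i s) = avoid A s \ A i := by
  rw [avoid, Finset.set_biInter_insert, Set.inter_comm, ← Set.sdiff_eq, avoid]

variable [MeasurableSpace Ω] {μ : Measure Ω} {A : ι → Set Ω} {N : ι → Finset ι} {x : ι → ℝ}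

lemma one_sub_mul_measureReal_avoid_le [DecidableEq ι] [IsFiniteMeasure μ]
    (hA : ∀ i, MeasurableSet (A i)) (hx₀ : ∀ i, 0 ≤ x i) (hx₁ : ∀ i, x i ≤ 1)
    (hN : ∀ i s, i ∉ s → Disjoint s (N i) →
      μ.real (avoid A s ∩ A i) ≤ x i * (∏ j ∈ N i, (1 - x j)) * μ.real (avoid A s))
    (s : Finset ι) : ∀ i ∉ s, (1 - x i) * μ.real (avoid A s) ≤ μ.real (avoid A (insert i s)) := by
  induction s using Finset.strongInduction with
  | H s ih =>
  intro i hi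
  have hx (j : ι) : 0 ≤ 1 - x j := sub_nonneg.2 (hx₁ j)
  have chain : (∏ j ∈ s ∩ N i, (1 - x j)) * μ.real (avoid A (s \ N i)) ≤ μ.real (avoid A s) := by
    have h := prod_mul_le_of_forall_mul_le_insert (f := fun t => μ.real (avoid A (s \ N i ∪ t)))
      (w := fun j => 1 - x j) (s ∩ N i) (fun j _ => hx j) fun t ht j hj hjt => by
        have hjs : j ∈ s ∧ j ∈ N i := Finset.mem_inter.1 hj
        have hjst : j ∉ s \ N i ∪ t := by
          simp only [Finset.mem_union, Finset.mem_sdiff, hjs, hjt, not_true_eq_false, and_false,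
            or_false, not_false_eq_true]
        have hsub : s \ N i ∪ t ⊆ s :=
          Finset.union_subset Finset.sdiff_subset (ht.trans Finset.inter_subset_left)
        rw [Finset.union_insert]
        exact ih _ ((Finset.ssubset_iff_of_subset hsub).2 ⟨j, hjs.1, hjst⟩) j hjst
    simpa only [Finset.union_empty, Finset.sdiff_union_inter] using h
  have bad : μ.real (avoid A s ∩ A i) ≤ x i * μ.real (avoid A s) :=
    calc μ.real (avoid A s ∩ A i)
        ≤ μ.real (avoid A (s \ N i) ∩ A i) :=
          measureReal_mono (Set.inter_subset_inter_left _ (avoid_anti A Finset.sdiff_subset))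
      _ ≤ x i * (∏ j ∈ N i, (1 - x j)) * μ.real (avoid A (s \ N i)) :=
          hN i _ (fun h => hi (Finset.sdiff_subset h)) Finset.sdiff_disjoint
      _ ≤ x i * (∏ j ∈ s ∩ N i, (1 - x j)) * μ.real (avoid A (s \ N i)) := by
          gcongr ?_ * _
          exact mul_le_mul_of_nonneg_left (Finset.prod_le_prod_of_subset_of_le_one
            Finset.inter_subset_right (fun j _ => hx j) fun j _ _ => sub_le_self 1 (hx₀ j)) (hx₀ i)
      _ ≤ x i * μ.real (avoid A s) := by
          rw [mul_assoc]
          exact mul_le_mul_of_nonneg_left chain (hx₀ i)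
  have split := measureReal_inter_add_sdiff (μ := μ) (s := avoid A s) (hA i)
  rw [avoid_insert]
  linarith

theorem lovasz_local_lemma [IsFiniteMeasure μ] (hA : ∀ i, MeasurableSet (A i))
    (hx₀ : ∀ i, 0 ≤ x i) (hx₁ : ∀ i, x i ≤ 1)
    (hN : ∀ i s, i ∉ s → Disjoint s (N i) →
      μ.real (avoid A s ∩ A i) ≤ x i * (∏ j ∈ N i, (1 - x j)) * μ.real (avoid A s))
    (s : Finset ι) : (∏ i ∈ s, (1 - x i)) * μ.real Set.univ ≤ μ.real (avoid A s) := by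
  classical
  have h := prod_mul_le_of_forall_mul_le_insert (f := fun t => μ.real (avoid A t))
    (w := fun i => 1 - x i) s (fun i _ => sub_nonneg.2 (hx₁ i)) fun t _ i _ hit =>
      one_sub_mul_measureReal_avoid_le hA hx₀ hx₁ hN t i hit
  simpa [avoid] using h

lemma exp_neg_one_le_one_sub_pow (d : ℕ) : Real.exp (-1) ≤ (1 - 1 / (d + 1 : ℝ)) ^ d := by
  rcases d.eq_zero_or_pos with rfl | hd
  · simp
  · have : (0 : ℝ) < d := Nat.cast_pos.2 hd
    calc Real.exp (-1) = (Real.exp 1)⁻¹ := Real.exp_neg 1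
      _ ≤ ((1 + (d : ℝ)⁻¹) ^ d)⁻¹ := inv_anti₀ (by positivity) Real.one_add_inv_pow_le_exp
      _ = (1 - 1 / (d + 1 : ℝ)) ^ d := by
          rw [← inv_pow]
          congr 1
          field_simp
          ring

lemma exists_le_mul_one_sub_pow {p : ℝ} {d : ℕ} (h : Real.exp 1 * p * (d + 1) ≤ 1) :
    ∃ x : ℝ, 0 ≤ x ∧ x < 1 ∧ p ≤ x * (1 - x) ^ d := by
  rcases d.eq_zero_or_pos with rfl | hd
  · refine ⟨1 / 2, by norm_num, by norm_num, ?_⟩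
    have he := Real.exp_one_gt_two
    norm_num at h ⊢
    nlinarith
  · have hd' : (0 : ℝ) < d := Nat.cast_pos.2 hd
    refine ⟨1 / (d + 1), by positivity, (div_lt_one (by positivity)).2 (by linarith), ?_⟩
    calc p ≤ 1 / (d + 1) * Real.exp (-1) := by
          rw [Real.exp_neg, ← div_eq_mul_inv, div_div, le_div_iff₀ (by positivity)]
          linarith
      _ ≤ _ := by
          gcongr
          exact exp_neg_one_le_one_sub_pow d

theorem lovasz_local_lemma_symmetric [Finite ι] [IsProbabilityMeasure μ] {p : ℝ} {d : ℕ}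
    (hA : ∀ i, MeasurableSet (A i)) (hp : ∀ i, μ.real (A i) ≤ p) (hd : ∀ i, (N i).card ≤ d)
    (hN : ∀ i s, i ∉ s → Disjoint s (N i) → IndepSet (avoid A s) (A i) μ)
    (h : Real.exp 1 * p * (d + 1) ≤ 1) : ∃ ω, ∀ i, ω ∉ A i := by
  have := Fintype.ofFinite ι
  obtain ⟨x, hx₀, hx₁, hpx⟩ := exists_le_mul_one_sub_pow h
  have hx : 0 < 1 - x := sub_pos.2 hx₁
  have key := lovasz_local_lemma (N := N) (x := fun _ => x) hA (fun _ => hx₀) (fun _ => hx₁.le)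
    (fun i s his hs => by
      rw [measureReal_def, (hN i s his hs).measure_inter_eq_mul, ENNReal.toReal_mul, mul_comm,
        Finset.prod_const]
      refine mul_le_mul_of_nonneg_right ?_ measureReal_nonneg
      calc μ.real (A i) ≤ x * (1 - x) ^ d := (hp i).trans hpx
        _ ≤ x * (1 - x) ^ (N i).card := by
          gcongr x * ?_
          exact pow_le_pow_of_le_one hx.le (sub_le_self 1 hx₀) (hd i)) Finset.univ
  have hpos : 0 < μ.real (avoid A Finset.univ) :=
    (mul_pos (Finset.prod_pos fun _ _ => hx) (by simp)).trans_le key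
  obtain ⟨ω, hω⟩ := nonempty_of_measureReal_ne_zero hpos.ne'
  exact ⟨ω, fun i => mem_avoid.1 hω i (Finset.mem_univ i)⟩

end LocalLemma

section ProductMeasure

open MeasureTheory ProbabilityTheory

variable {ι : Type*} {X : ι → Type*} {S T : Finset ι} {E E' : Set (∀ i, X i)}

lemma preimage_image_restrict_of_dependsOn (hE : DependsOn (· ∈ E) (S : Set ι)) :
    S.restrict ⁻¹' (S.restrict '' E) = E := by
  refine (Set.subset_preimage_image _ _).antisymm' ?_
  rintro ω ⟨ω', hω', heq⟩
  exact (hE fun i hi => congrFun heq ⟨i, hi⟩).mp hω'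

variable [∀ i, MeasurableSpace (X i)] [∀ i, Countable (X i)] [∀ i, MeasurableSingletonClass (X i)]

lemma measurableSet_of_dependsOn (hE : DependsOn (· ∈ E) (S : Set ι)) : MeasurableSet E := by
  rw [← preimage_image_restrict_of_dependsOn hE]
  exact S.measurable_restrict (.of_discrete)

lemma indepSet_infinitePi_of_dependsOn (μ : ∀ i, Measure (X i)) [∀ i, IsProbabilityMeasure (μ i)]
    (hST : Disjoint S T) (hE : DependsOn (· ∈ E) (S : Set ι))
    (hE' : DependsOn (· ∈ E') (T : Set ι)) : IndepSet E E' (Measure.infinitePi μ) := by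
  have hind : IndepFun S.restrict T.restrict (Measure.infinitePi μ) :=
    (iIndepFun_infinitePi (X := fun _ a => a) fun _ => measurable_id).indepFun_finset S T hST
      fun i => measurable_pi_apply i
  rw [← preimage_image_restrict_of_dependsOn hE, ← preimage_image_restrict_of_dependsOn hE']
  exact (indepFun_iff_indepSet_preimage S.measurable_restrict T.measurable_restrict).1 hind _ _
    .of_discrete .of_discrete

lemma uniformOn_univ_bool_le {t : Set Bool} {b : Bool} (hb : b ∉ t) :
    uniformOn Set.univ t ≤ 1 / 2 := by
  have h : t ⊆ {!b} := fun a ha => by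
    rcases a <;> rcases b <;> simp_all
  calc uniformOn Set.univ t ≤ uniformOn Set.univ {!b} := measure_mono h
    _ = 1 / 2 := by rw [uniformOn_univ]; simp

end ProductMeasure

/-- A clause over the variables `V`: the literal `v` is encoded as `(v, true)` and its negation as
`(v, false)`. -/
abbrev Clause (V : Type*) := Finset (V × Bool)

/-- A formula in conjunctive normal form over the variables `V`, as its finite set of clauses. -/
abbrev CNF (V : Type*) := Finset (Clause V)

namespace Clause

open MeasureTheory ProbabilityTheory

variable {V : Type*}

/-- The set of assignments violating every literal of the clause `C`. -/
def violating (C : Clause V) : Set (V → Bool) := {α | ∀ p ∈ C, α p.1 ≠ p.2}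

/-- The distribution of an assignment whose values are independent fair coin flips. -/
noncomputable abbrev uniformAssignment (V : Type*) : Measure (V → Bool) :=
  Measure.infinitePi fun _ => uniformOn Set.univ

variable [DecidableEq V]

/-- The variables occurring in the clause `C`, positively or negatively. -/
def vars (C : Clause V) : Finset V := C.image Prod.fst

lemma mem_vars_of_mem {C : Clause V} {p : V × Bool} (hp : p ∈ C) : p.1 ∈ C.vars :=
  Finset.mem_image_of_mem _ hp

/-- The clause `C` with all literals of the variable `v` removed. -/
def eraseVar (C : Clause V) (v : V) : Clause V := {p ∈ C | p.1 ≠ v}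

lemma eraseVar_subset (C : Clause V) (v : V) : C.eraseVar v ⊆ C := Finset.filter_subset _ _

lemma vars_eraseVar (C : Clause V) (v : V) : (C.eraseVar v).vars = C.vars.erase v := by
  ext w
  simp only [vars, eraseVar, Finset.mem_image, Finset.mem_filter, Finset.mem_erase]
  constructor
  · rintro ⟨p, ⟨hp, hne⟩, rfl⟩
    exact ⟨hne, p, hp, rfl⟩
  · rintro ⟨hne, p, hp, rfl⟩
    exact ⟨p, ⟨hp, hne⟩, rfl⟩

lemma dependsOn_violating (C : Clause V) : DependsOn (· ∈ C.violating) (C.vars : Set V) :=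
  fun _ _ h => propext <| forall₂_congr fun p hp => by rw [h p.1 (mem_vars_of_mem hp)]

lemma violating_eq_pi (C : Clause V) :
    C.violating = (C.vars : Set V).pi fun v => {b | (v, b) ∉ C} := by
  ext α
  constructor
  · intro h v _ hv
    exact h (v, α v) hv rfl
  · rintro h ⟨v, b⟩ hp heq
    exact h v (mem_vars_of_mem hp) (by rwa [show α v = b from heq])

lemma dependsOn_avoid_violating {ι : Type*} (c : ι → Clause V) (s : Finset ι) :
    DependsOn (· ∈ avoid (fun i => (c i).violating) s) (s.biUnion fun i => (c i).vars : Set V) := by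
  intro α β h
  simp only [mem_avoid]
  refine propext <| forall₂_congr fun i hi => not_congr <| iff_of_eq <|
    (c i).dependsOn_violating fun v hv => h v ?_
  exact Finset.mem_biUnion.2 ⟨i, hi, hv⟩

lemma uniformAssignment_violating_le (C : Clause V) :
    (uniformAssignment V).real C.violating ≤ (1 / 2) ^ C.vars.card := by
  have h : uniformAssignment V C.violating ≤ (1 / 2) ^ C.vars.card := by
    rw [violating_eq_pi, Measure.infinitePi_pi _ fun _ _ => .of_discrete]
    refine Finset.prod_le_pow_card _ _ _ fun v hv => ?_
    obtain ⟨p, hp, rfl⟩ := Finset.mem_image.1 hv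
    exact uniformOn_univ_bool_le (b := p.2) (by simpa using hp)
  simpa [measureReal_def] using ENNReal.toReal_mono (by finiteness) h

end Clause

namespace CNF

variable {V : Type*}

/-- The formula `F` has an assignment satisfying some literal of each of its clauses. -/
def Satisfiable (F : CNF V) : Prop := ∃ α : V → Bool, ∀ C ∈ F, ∃ p ∈ C, α p.1 = p.2

lemma satisfiable_iff_exists_notMem_violating {F : CNF V} :
    F.Satisfiable ↔ ∃ α, ∀ C ∈ F, α ∉ C.violating := by
  simp only [Satisfiable, Clause.violating, Set.mem_ofPred_eq, not_forall, not_not, exists_prop]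

variable [DecidableEq V]

lemma Satisfiable.of_image {F : CNF V} {f : Clause V → Clause V} (hf : ∀ C ∈ F, f C ⊆ C)
    (h : Satisfiable (F.image f)) : F.Satisfiable := by
  obtain ⟨α, hα⟩ := h
  refine ⟨α, fun C hC => ?_⟩
  obtain ⟨p, hp, hαp⟩ := hα (f C) (Finset.mem_image_of_mem f hC)
  exact ⟨p, hf C hC hp, hαp⟩

/-- The number of clauses of the formula `F` in which the variable `v` occurs. -/
def degree (F : CNF V) (v : V) : ℕ := {C ∈ F | v ∈ C.vars}.card

lemma degree_image_le (F : CNF V) (f : Clause V → Clause V) (v : V) :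
    degree (F.image f) v ≤ {C ∈ F | v ∈ (f C).vars}.card := by
  rw [degree, Finset.filter_image]
  exact Finset.card_image_le

lemma sum_degree_le (F : CNF V) (s : Finset V) :
    ∑ v ∈ s, F.degree v ≤ ∑ C ∈ F, C.vars.card :=
  calc ∑ v ∈ s, F.degree v = ∑ C ∈ F, {v ∈ s | v ∈ C.vars}.card :=
        Finset.sum_card_bipartiteAbove_eq_sum_card_bipartiteBelow fun v (C : Clause V) => v ∈ C.vars
    _ ≤ ∑ C ∈ F, C.vars.card := Finset.sum_le_sum fun _ _ =>
        Finset.card_le_card fun _ hv => (Finset.mem_filter.1 hv).2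

/-- The clauses of `F` other than `C` sharing a variable with `C`: the neighbourhood of `C` in the
dependency graph to which the local lemma is applied. -/
def neighbors (F : CNF V) (C : Clause V) : CNF V := {D ∈ F | D ≠ C ∧ ¬Disjoint C.vars D.vars}

lemma card_neighbors_le {F : CNF V} {C : Clause V} {Δ : ℕ} (hC : C ∈ F)
    (hΔ : ∀ v ∈ C.vars, F.degree v ≤ Δ) : (F.neighbors C).card ≤ C.vars.card * (Δ - 1) := by
  have hsub : F.neighbors C ⊆ C.vars.biUnion fun v => {D ∈ F | v ∈ D.vars}.erase C := by
    intro D hD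
    obtain ⟨hDF, hne, hdisj⟩ := Finset.mem_filter.1 hD
    obtain ⟨v, hvC, hvD⟩ := Finset.not_disjoint_iff.1 hdisj
    exact Finset.mem_biUnion.2 ⟨v, hvC, Finset.mem_erase.2 ⟨hne, Finset.mem_filter.2 ⟨hDF, hvD⟩⟩⟩
  refine (Finset.card_le_card hsub).trans (Finset.card_biUnion_le_card_mul _ _ _ fun v hv => ?_)
  rw [Finset.card_erase_of_mem (Finset.mem_filter.2 ⟨hC, hv⟩)]
  exact Nat.sub_le_sub_right (hΔ v hv) 1

theorem satisfiable_of_card_neighbors_le {F : CNF V} {k d : ℕ} (hk : ∀ C ∈ F, k ≤ C.vars.card)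
    (hd : ∀ C ∈ F, (F.neighbors C).card ≤ d) (h : Real.exp 1 * (d + 1) ≤ 2 ^ k) :
    F.Satisfiable := by
  rw [satisfiable_iff_exists_notMem_violating]
  have key : ∃ α, ∀ C : F, α ∉ C.1.violating := by
    refine lovasz_local_lemma_symmetric (μ := Clause.uniformAssignment V) (p := (1 / 2) ^ k)
      (d := d) (N := fun C : F => (F.neighbors C).subtype (· ∈ F))
      (fun C => measurableSet_of_dependsOn C.1.dependsOn_violating) (fun C => ?_) (fun C => ?_)
      (fun C s hCs hs => ?_) ?_
    · exact C.1.uniformAssignment_violating_le.trans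
        (pow_le_pow_of_le_one (by norm_num) (by norm_num) (hk C C.2))
    · rw [Finset.card_subtype]
      exact (Finset.card_filter_le _ _).trans (hd C C.2)
    · refine indepSet_infinitePi_of_dependsOn _ ?_
        (Clause.dependsOn_avoid_violating (fun D : F => D.1) s) C.1.dependsOn_violating
      rw [Finset.disjoint_biUnion_left]
      intro D hD
      by_contra hdisj
      refine Finset.disjoint_left.1 hs hD (Finset.mem_subtype.2 (Finset.mem_filter.2 ⟨D.2, ?_, ?_⟩))
      · exact fun heq => hCs (Subtype.ext heq ▸ hD)
      · rwa [disjoint_comm]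
    · rw [one_div, inv_pow, mul_right_comm, ← div_eq_mul_inv]
      exact (div_le_one (by positivity)).2 h
  obtain ⟨α, hα⟩ := key
  exact ⟨α, fun C hC => hα ⟨C, hC⟩⟩

theorem satisfiable_of_degree_le {F : CNF V} {k Δ : ℕ} (hk₀ : k ≠ 0)
    (hk : ∀ C ∈ F, C.vars.card = k) (hΔ : ∀ v, F.degree v ≤ Δ)
    (h : Real.exp 1 * (k * Δ) ≤ 2 ^ k) : F.Satisfiable := by
  rcases F.eq_empty_or_nonempty with rfl | ⟨C₀, hC₀⟩
  · simp [Satisfiable]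
  have hΔ₀ : 0 < Δ := by
    obtain ⟨v, hv⟩ := Finset.card_pos.1 ((Nat.pos_of_ne_zero hk₀).trans_eq (hk C₀ hC₀).symm)
    exact (Finset.card_pos.2 ⟨C₀, Finset.mem_filter.2 ⟨hC₀, hv⟩⟩).trans_le (hΔ v)
  have hle : k * (Δ - 1) + 1 ≤ k * Δ := by
    obtain ⟨m, rfl⟩ := Nat.exists_eq_succ_of_ne_zero hΔ₀.ne'
    simp only [Nat.succ_eq_add_one, Nat.add_sub_cancel]
    nlinarith [Nat.pos_of_ne_zero hk₀]
  refine satisfiable_of_card_neighbors_le (fun C hC => (hk C hC).ge) (d := k * (Δ - 1))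
    (fun C hC => hk C hC ▸ card_neighbors_le hC fun v _ => hΔ v) (le_trans ?_ h)
  gcongr
  exact_mod_cast hle

theorem exists_two_pow_lt_mul_degree {F : CNF V} {k : ℕ} (hk₀ : k ≠ 0)
    (hk : ∀ C ∈ F, C.vars.card = k) (hF : ¬F.Satisfiable) :
    ∃ v, 2 ^ k < Real.exp 1 * (k * F.degree v) := by
  have hpos : 0 < Real.exp 1 * k := mul_pos (Real.exp_pos 1) (by positivity)
  by_contra! h
  refine hF (satisfiable_of_degree_le hk₀ hk (Δ := ⌊2 ^ k / (Real.exp 1 * k)⌋₊) (fun v => ?_) ?_)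
  · refine Nat.le_floor ((le_div_iff₀ hpos).2 ?_)
    linarith [h v]
  · rw [← mul_assoc, mul_comm, ← le_div_iff₀ hpos]
    exact Nat.floor_le (by positivity)

/-- Linearity of a formula: distinct clauses share at most one variable. -/
def IsLinear (F : CNF V) : Prop :=
  (F : Set (Clause V)).Pairwise fun C D => (C.vars ∩ D.vars).card ≤ 1

lemma IsLinear.injOn_of_mem_vars_erase {F : CNF V} (hF : F.IsLinear) {y : Clause V → V}
    (hy : ∀ C ∈ F, y C ∈ C.vars) (x : V) :
    Set.InjOn y ({C ∈ F | x ∈ C.vars.erase (y C)} : Finset (Clause V)) := by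
  intro C hC D hD heq
  obtain ⟨hCF, hxC⟩ := Finset.mem_filter.1 hC
  obtain ⟨hDF, hxD⟩ := Finset.mem_filter.1 hD
  by_contra hne
  exact (Finset.mem_erase.1 hxC).1 <| Finset.card_le_one.1 (hF hCF hDF hne)
    x (Finset.mem_inter.2 ⟨Finset.mem_of_mem_erase hxC, Finset.mem_of_mem_erase hxD⟩)
    (y C) (Finset.mem_inter.2 ⟨hy C hCF, heq ▸ hy D hDF⟩)

theorem IsLinear.sq_card_le_sum_card_vars {F : CNF V} (hF : F.IsLinear) {y : Clause V → V}
    (hy : ∀ C ∈ F, y C ∈ C.vars) (hmax : ∀ C ∈ F, ∀ v ∈ C.vars, F.degree v ≤ F.degree (y C))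
    (x : V) : {C ∈ F | x ∈ C.vars.erase (y C)}.card ^ 2 ≤ ∑ C ∈ F, C.vars.card := by
  set G := {C ∈ F | x ∈ C.vars.erase (y C)}
  have hdeg : ∀ C ∈ G, G.card ≤ F.degree (y C) := fun C hC => by
    obtain ⟨hCF, hx⟩ := Finset.mem_filter.1 hC
    calc G.card ≤ F.degree x := Finset.card_le_card <|
          Finset.monotone_filter_right F fun _ _ => Finset.mem_of_mem_erase
      _ ≤ F.degree (y C) := hmax C hCF x (Finset.mem_of_mem_erase hx)
  calc G.card ^ 2 = G.card • G.card := by rw [sq, smul_eq_mul]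
    _ ≤ ∑ C ∈ G, F.degree (y C) := Finset.card_nsmul_le_sum _ _ _ hdeg
    _ = ∑ v ∈ G.image y, F.degree v := (Finset.sum_image (hF.injOn_of_mem_vars_erase hy x)).symm
    _ ≤ ∑ C ∈ F, C.vars.card := F.sum_degree_le _

lemma exists_forall_mem_vars_degree_le [Nonempty V] {F : CNF V}
    (hF : ∀ C ∈ F, C.vars.Nonempty) :
    ∃ y : Clause V → V, (∀ C ∈ F, y C ∈ C.vars) ∧
      ∀ C ∈ F, ∀ v ∈ C.vars, F.degree v ≤ F.degree (y C) := by
  choose! y hy hmax using fun C hC => Finset.exists_max_image (Clause.vars C) F.degree (hF C hC)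
  exact ⟨y, hy, hmax⟩

theorem IsLinear.four_pow_lt_of_not_satisfiable {F : CNF V} (hF : F.IsLinear) {k : ℕ} (hk₀ : k ≠ 0)
    (hk : ∀ C ∈ F, C.vars.card = k + 1) (hunsat : ¬F.Satisfiable) :
    (4 : ℝ) ^ k < Real.exp 1 ^ 2 * k ^ 2 * (k + 1) * F.card := by
  have hne : ∀ C ∈ F, C.vars.Nonempty := fun C hC =>
    Finset.card_pos.1 ((Nat.succ_pos k).trans_eq (hk C hC).symm)
  obtain ⟨C₀, hC₀⟩ : F.Nonempty :=
    Finset.nonempty_iff_ne_empty.2 fun h => hunsat (by simp [h, Satisfiable])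
  have : Nonempty V := ⟨(hne C₀ hC₀).choose⟩
  obtain ⟨y, hy, hmax⟩ := exists_forall_mem_vars_degree_le hne
  obtain ⟨x, hx⟩ : ∃ x, 2 ^ k <
      Real.exp 1 * (k * degree (F.image fun C => C.eraseVar (y C)) x) := by
    refine exists_two_pow_lt_mul_degree hk₀ (fun C' hC' => ?_) fun h =>
      hunsat (h.of_image fun C _ => C.eraseVar_subset (y C))
    obtain ⟨C, hC, rfl⟩ := Finset.mem_image.1 hC'
    rw [Clause.vars_eraseVar, Finset.card_erase_of_mem (hy C hC), hk C hC, Nat.add_sub_cancel]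
  have hsq : (degree (F.image fun C => C.eraseVar (y C)) x : ℝ) ^ 2 ≤ F.card * (k + 1) := by
    have hG := F.degree_image_le (fun C => C.eraseVar (y C)) x
    simp only [Clause.vars_eraseVar] at hG
    have := (Nat.pow_le_pow_left hG 2).trans (hF.sq_card_le_sum_card_vars hy hmax x)
    rw [Finset.sum_const_nat hk] at this
    exact_mod_cast this
  calc (4 : ℝ) ^ k = (2 ^ k) ^ 2 := by rw [← pow_mul, mul_comm k, pow_mul]; norm_num
    _ < (Real.exp 1 * (k * degree (F.image fun C => C.eraseVar (y C)) x)) ^ 2 := by gcongr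
    _ = Real.exp 1 ^ 2 * k ^ 2 * (degree (F.image fun C => C.eraseVar (y C)) x : ℝ) ^ 2 := by ring
    _ ≤ Real.exp 1 ^ 2 * k ^ 2 * (F.card * (k + 1)) := by gcongr
    _ = Real.exp 1 ^ 2 * k ^ 2 * (k + 1) * F.card := by ring

end CNF

/-- Every unsatisfiable linear k-CNF formula (k ≥ 2) has more than
4^k/(4·e²·k³) clauses. -/
theorem stmt10 {V : Type*} [DecidableEq V] (k : ℕ) (hk : 2 ≤ k)
    (F : Finset (Finset (V × Bool)))
    (hcard : ∀ C ∈ F, C.card = k ∧ (C.image Prod.fst).card = k)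
    (hlin : ∀ C ∈ F, ∀ D ∈ F, C ≠ D → ((C.image Prod.fst) ∩ (D.image Prod.fst)).card ≤ 1)
    (hunsat : ∀ α : V → Bool, ∃ C ∈ F, ∀ p ∈ C, α p.1 ≠ p.2) :
    (4 : ℝ) ^ k / (4 * Real.exp 1 ^ 2 * (k : ℝ) ^ 3) < F.card := by
  obtain ⟨r, rfl⟩ := Nat.exists_eq_add_of_le' (one_le_two.trans hk)
  have hF : CNF.IsLinear F := fun C hC D hD => hlin C hC D hD
  have hF' : ¬CNF.Satisfiable F := by
    rw [CNF.satisfiable_iff_exists_notMem_violating]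
    push Not
    exact hunsat
  have h := hF.four_pow_lt_of_not_satisfiable (k := r) (by lia) (fun C hC => (hcard C hC).2) hF'
  rw [div_lt_iff₀ (by positivity)]
  calc (4 : ℝ) ^ (r + 1) = 4 * 4 ^ r := pow_succ' 4 r
    _ < 4 * (Real.exp 1 ^ 2 * r ^ 2 * (r + 1) * F.card) := by gcongr
    _ ≤ 4 * (Real.exp 1 ^ 2 * (r + 1) ^ 2 * (r + 1) * F.card) := by gcongr; linarith
    _ = F.card * (4 * Real.exp 1 ^ 2 * ((r + 1 : ℕ) : ℝ) ^ 3) := by push_cast; ring
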